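/- In the upper half-plane model of ℍ², let Ω = {(r sin φ, r cos φ) : r ∈ (1, e^{π/√μ}), φ ∈ (0, φ₀)} for φ₀ ∈ (0, π/2) and μ > 0, and let φ_D ∈ (0, π/2) be defined so that the geodesic arc {(sin φ, cos φ) : φ ∈ [0, φ_D]} has hyperbolic length D. Then D ≤ diam(Ω_{φ_D, μ}) ≤ D + cosh(D)·π/√μ. -/

import Mathlib

open Real Set UpperHalfPlane

lemma c_sinh_le (c x : ℝ) (hc : 1 ≤ c) (hx : 0 ≤ x) : c * Real.sinh x ≤ Real.sinh (c * x) := by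
  have hd : ∀ y : ℝ, HasDerivAt (fun y => Real.sinh (c * y) - c * Real.sinh y)
      (Real.cosh (c * y) * (c * 1) - c * Real.cosh y) y := fun y =>
    (((hasDerivAt_id y).const_mul c).sinh).sub ((Real.hasDerivAt_sinh y).const_mul c)
  have hm : MonotoneOn (fun y => Real.sinh (c * y) - c * Real.sinh y) (Ici 0) := by
    apply monotoneOn_of_deriv_nonneg (convex_Ici 0)
    · exact fun y _ => (hd y).continuousAt.continuousWithinAt
    · exact fun y _ => (hd y).differentiableAt.differentiableWithinAt
    · intro y hy
      rw [interior_Ici] at hy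
      have hy : 0 < y := hy
      rw [(hd y).deriv]
      have : Real.cosh y ≤ Real.cosh (c * y) := by
        rw [Real.cosh_le_cosh, abs_of_pos hy, abs_of_nonneg (by positivity)]
        nlinarith
      nlinarith
  have := hm (mem_Ici.2 le_rfl) (mem_Ici.2 hx) hx
  simp at this
  linarith

noncomputable def ptH (a ψ : ℝ) (h : 0 < Real.cos ψ) : UpperHalfPlane :=
  ⟨Complex.mk (Real.exp a * Real.sin ψ) (Real.exp a * Real.cos ψ), mul_pos (Real.exp_pos a) h⟩

lemma cosh_dist_ptH (a b ψ θ : ℝ) (h : 0 < Real.cos ψ) (h' : 0 < Real.cos θ) :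
    Real.cosh (dist (ptH a ψ h) (ptH b θ h')) =
      (Real.cosh (a - b) - Real.sin ψ * Real.sin θ) / (Real.cos ψ * Real.cos θ) := by
  rw [UpperHalfPlane.cosh_dist']
  have e1 : (ptH a ψ h).re = Real.exp a * Real.sin ψ := rfl
  have e2 : (ptH a ψ h).im = Real.exp a * Real.cos ψ := rfl
  have e3 : (ptH b θ h').re = Real.exp b * Real.sin θ := rfl
  have e4 : (ptH b θ h').im = Real.exp b * Real.cos θ := rfl
  rw [e1, e2, e3, e4, Real.cosh_eq, neg_sub, Real.exp_sub, Real.exp_sub]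
  have ha := Real.exp_pos a
  have hb := Real.exp_pos b
  have s1 := Real.sin_sq ψ
  have s2 := Real.sin_sq θ
  field_simp
  ring_nf
  rw [s1, s2]
  ring

lemma dist_radial (a b ψ : ℝ) (h : 0 < Real.cos ψ) :
    dist (ptH a ψ h) (ptH b ψ h) ≤ |a - b| / Real.cos ψ := by
  have hc : 1 ≤ 1 / Real.cos ψ := by
    rw [le_div_iff₀ h]; linarith [Real.cos_le_one ψ]
  have h1 := c_sinh_le (1 / Real.cos ψ) (|a - b| / 2) hc (by positivity)
  have h2 : Real.cosh (dist (ptH a ψ h) (ptH b ψ h)) ≤ Real.cosh (|a - b| / Real.cos ψ) := by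
    rw [cosh_dist_ptH, ← Real.cosh_abs (a - b)]
    have e1 : Real.cosh |a - b| = 1 + 2 * Real.sinh (|a - b| / 2) ^ 2 := by
      have := Real.cosh_two_mul (|a - b| / 2)
      rw [mul_div_cancel₀ _ (two_ne_zero)] at this
      rw [this, Real.cosh_sq]; ring
    have e2 : Real.cosh (|a - b| / Real.cos ψ) =
        1 + 2 * Real.sinh (1 / Real.cos ψ * (|a - b| / 2)) ^ 2 := by
      have := Real.cosh_two_mul (1 / Real.cos ψ * (|a - b| / 2))
      have e : 2 * (1 / Real.cos ψ * (|a - b| / 2)) = |a - b| / Real.cos ψ := by ring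
      rw [e] at this
      rw [this, Real.cosh_sq]; ring
    rw [e1, e2]
    have h0 : 0 ≤ Real.sinh (|a - b| / 2) := Real.sinh_nonneg_iff.2 (by positivity)
    have h3 := pow_le_pow_left₀ (by positivity) h1 2
    calc _ = 1 + 2 * (1 / Real.cos ψ * Real.sinh (|a - b| / 2)) ^ 2 := by
            have s1 := Real.sin_sq ψ
            field_simp
            rw [s1]; ring
      _ ≤ _ := by linarith
  rw [Real.cosh_le_cosh, abs_of_nonneg dist_nonneg, abs_of_nonneg (by positivity)] at h2
  exact h2

lemma dist_angular (a ψ θ φ D : ℝ) (hψ : 0 < ψ) (hψθ : ψ ≤ θ) (hθ : θ < φ) (hφ : φ < π / 2)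
    (hD : 0 < D) (hc : Real.cosh D = 1 / Real.cos φ)
    (h : 0 < Real.cos ψ) (h' : 0 < Real.cos θ) :
    dist (ptH a ψ h) (ptH a θ h') ≤ D := by
  have h2 : Real.cosh (dist (ptH a ψ h) (ptH a θ h')) ≤ Real.cosh D := by
    rw [cosh_dist_ptH, hc, sub_self, Real.cosh_zero]
    have hp : 0 < Real.cos φ := Real.cos_pos_of_mem_Ioo ⟨by linarith, hφ⟩
    have h1 : Real.cos φ ≤ Real.cos θ :=
      Real.cos_le_cos_of_nonneg_of_le_pi (by linarith) (by linarith) hθ.le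
    have h3 : Real.sin ψ ≤ Real.sin θ :=
      Real.sin_le_sin_of_le_of_le_pi_div_two (by linarith) (by linarith) hψθ
    have h4 : 0 < Real.sin ψ := Real.sin_pos_of_pos_of_lt_pi hψ (by linarith)
    have h5 : 1 - Real.sin ψ * Real.sin θ ≤ Real.cos ψ := by
      nlinarith [Real.sin_sq_add_cos_sq ψ, Real.cos_le_one ψ]
    calc _ ≤ Real.cos ψ / (Real.cos ψ * Real.cos θ) := by gcongr
      _ = 1 / Real.cos θ := by field_simp
      _ ≤ _ := by gcongr
  rwa [Real.cosh_le_cosh, abs_of_nonneg dist_nonneg, abs_of_pos hD] at h2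

/-- Diameter estimates for the domain `Ω_{φ_D, μ}` in the upper half-plane
model of `ℍ²`: if the geodesic arc `{(sin ψ, cos ψ) : ψ ∈ [0, φ_D]}` has
hyperbolic length `D` (i.e. the hyperbolic distance from `i` to
`(sin φ_D, cos φ_D)` is `D`), then `D ≤ diam Ω ≤ D + cosh(D) π / √μ`. -/
theorem stmt17
    (μ D φD : ℝ) (hμ : 0 < μ) (hD : 0 < D) (hφD : φD ∈ Ioo (0 : ℝ) (π / 2))
    (hlen : dist
        (⟨Complex.mk (Real.sin φD) (Real.cos φD),
          by simpa using Real.cos_pos_of_mem_Ioo ⟨by linarith [hφD.1, Real.pi_pos], hφD.2⟩⟩ :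
          UpperHalfPlane)
        (UpperHalfPlane.I) = D)
    (Ω : Set UpperHalfPlane)
    (hΩ : Ω = {z : UpperHalfPlane | ∃ r ψ : ℝ,
      r ∈ Ioo (1 : ℝ) (Real.exp (π / Real.sqrt μ)) ∧ ψ ∈ Ioo (0 : ℝ) φD ∧
      (z : ℂ) = Complex.mk (r * Real.sin ψ) (r * Real.cos ψ)}) :
    D ≤ Metric.diam Ω ∧ Metric.diam Ω ≤ D + Real.cosh D * π / Real.sqrt μ := by
  obtain ⟨hφ0, hφ1⟩ := hφD
  have hpos : ∀ ψ : ℝ, 0 ≤ ψ → ψ ≤ φD → 0 < Real.cos ψ := fun ψ h1 h2 =>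
    Real.cos_pos_of_mem_Ioo ⟨by linarith, by linarith⟩
  have hcφ := hpos φD hφ0.le le_rfl
  have hcD : Real.cosh D = 1 / Real.cos φD := by
    rw [← hlen, UpperHalfPlane.cosh_dist']
    have e1 : ∀ h, (⟨Complex.mk (Real.sin φD) (Real.cos φD), h⟩ : UpperHalfPlane).re
      = Real.sin φD := fun _ => rfl
    have e2 : ∀ h, (⟨Complex.mk (Real.sin φD) (Real.cos φD), h⟩ : UpperHalfPlane).im
      = Real.cos φD := fun _ => rfl
    rw [e1, e2, UpperHalfPlane.I_re, UpperHalfPlane.I_im]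
    have := Real.sin_sq_add_cos_sq φD
    field_simp
    linarith
  set L := π / Real.sqrt μ with hL
  have hLpos : 0 < L := by positivity
  have hmem : ∀ z ∈ Ω, ∃ a ψ : ℝ, ∃ h : 0 < Real.cos ψ, 0 < a ∧ a < L ∧ 0 < ψ ∧ ψ < φD ∧
      z = ptH a ψ h := by
    intro z hz
    rw [hΩ] at hz
    obtain ⟨r, ψ, hr, hψ, hz⟩ := hz
    have hr0 : 0 < r := by linarith [hr.1]
    refine ⟨Real.log r, ψ, hpos ψ hψ.1.le hψ.2.le, Real.log_pos hr.1,
      (Real.log_lt_iff_lt_exp hr0).2 hr.2, hψ.1, hψ.2, ?_⟩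
    apply UpperHalfPlane.ext
    rw [hz]
    simp only [ptH, Real.exp_log hr0]
  have hmem' : ∀ ψ : ℝ, ∀ h : 0 < Real.cos ψ, 0 < ψ → ψ < φD → ptH (L / 2) ψ h ∈ Ω := by
    intro ψ h h0 h1
    rw [hΩ]
    exact ⟨Real.exp (L / 2), ψ, ⟨Real.one_lt_exp_iff.2 (by linarith),
      Real.exp_lt_exp.2 (by linarith)⟩, ⟨h0, h1⟩, rfl⟩
  have hang : ∀ a ψ θ : ℝ, ∀ h : 0 < Real.cos ψ, ∀ h' : 0 < Real.cos θ, 0 < ψ → ψ < φD →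
      0 < θ → θ < φD → dist (ptH a ψ h) (ptH a θ h') ≤ D := by
    intro a ψ θ h h' a1 a2 a3 a4
    rcases le_total ψ θ with hl | hl
    · exact dist_angular a ψ θ φD D a1 hl a4 hφ1 hD hcD h h'
    · rw [dist_comm]
      exact dist_angular a θ ψ φD D a3 hl a2 hφ1 hD hcD h' h
  have hub : ∀ z ∈ Ω, ∀ w ∈ Ω, dist z w ≤ D + Real.cosh D * π / Real.sqrt μ := by
    intro z hz w hw
    obtain ⟨a, ψ, h, a1, a2, a3, a4, rfl⟩ := hmem z hz
    obtain ⟨b, θ, h', b1, b2, b3, b4, rfl⟩ := hmem w hw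
    have t := dist_triangle (ptH a ψ h) (ptH b ψ h) (ptH b θ h')
    have t1 := dist_radial a b ψ h
    have t2 := hang b ψ θ h h' a3 a4 b3 b4
    have t3 : |a - b| / Real.cos ψ ≤ L / Real.cos φD := by
      have : |a - b| ≤ L := abs_le.2 ⟨by linarith, by linarith⟩
      have : Real.cos φD ≤ Real.cos ψ :=
        Real.cos_le_cos_of_nonneg_of_le_pi (by linarith) (by linarith) a4.le
      gcongr
    have t4 : Real.cosh D * π / Real.sqrt μ = L / Real.cos φD := by
      rw [hcD, hL]; ring
    linarith
  have hbd : Bornology.IsBounded Ω := Metric.isBounded_iff.2 ⟨_, fun z hz w hw => hub z hz w hw⟩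
  refine ⟨?_, Metric.diam_le_of_forall_dist_le (by positivity) hub⟩
  have hcont : Filter.Tendsto (fun ε : ℝ => (1 - Real.sin ε * Real.sin (φD - ε)) /
      (Real.cos ε * Real.cos (φD - ε))) (nhdsWithin 0 (Ioi 0)) (nhds (Real.cosh D)) := by
    have hc : ContinuousAt (fun ε : ℝ => (1 - Real.sin ε * Real.sin (φD - ε)) /
      (Real.cos ε * Real.cos (φD - ε))) 0 := by
      apply ContinuousAt.div
      · fun_prop
      · fun_prop
      · simpa using hcφ.ne'
    have := hc.tendsto
    simp only [Real.sin_zero, Real.cos_zero, sub_zero, zero_mul, one_mul] at this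
    rw [hcD]
    exact this.mono_left nhdsWithin_le_nhds
  have key : Real.cosh D ≤ Real.cosh (Metric.diam Ω) := by
    refine le_of_tendsto hcont ?_
    filter_upwards [Ioo_mem_nhdsGT hφ0] with ε hε
    have h := hpos ε hε.1.le hε.2.le
    have h' := hpos (φD - ε) (by linarith [hε.2]) (by linarith [hε.1])
    have := cosh_dist_ptH (L / 2) (L / 2) ε (φD - ε) h h'
    rw [sub_self, Real.cosh_zero] at this
    rw [← this, Real.cosh_le_cosh, abs_of_nonneg dist_nonneg, abs_of_nonneg Metric.diam_nonneg]
    exact Metric.dist_le_diam_of_mem hbd (hmem' _ h hε.1 hε.2)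
      (hmem' _ h' (by linarith [hε.2]) (by linarith [hε.1]))
  rwa [Real.cosh_le_cosh, abs_of_pos hD, abs_of_nonneg Metric.diam_nonneg] at key
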